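/- Fix integers n, t, i, j with 2 ≤ t < n, i ≥ 1, j ≥ 0 and t·i + j < n. Let 𝒲 be the collection of all subsets W ⊆ ℤ/nℤ for which there exist a t-sparse set C ⊆ ℤ/nℤ with |C| = i and a set A ⊆ {c + t : c ∈ C} with |A| = j such that W = (⋃_{c ∈ C} F(c)) ∪ A. Then (n − i·t)·|𝒲| = n·C(i, j)·C(n − i·t, i). -/

import Mathlib

/-- The facet `F(i) = {i, i+1, …, i+t-1}` of the path complex `Δ_t(C_n)`
with standard labeling, vertices identified with `ℤ/nℤ`. -/
def facet (n t : ℕ) (i : ZMod n) : Finset (ZMod n) :=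
  (Finset.range t).image (fun r : ℕ => i + (r : ZMod n))

/-- A subset `C` of `ℤ/nℤ` is `t`-sparse if for every `c ∈ C` and every `1 ≤ k ≤ t`
one has `c + k ∉ C`. -/
def TSparse (n t : ℕ) (C : Finset (ZMod n)) : Prop :=
  ∀ c ∈ C, ∀ k : ℕ, 1 ≤ k → k ≤ t → c + (k : ZMod n) ∉ C

/-- `Ind(W) = {j : F(j) ⊆ W}`, the index set of the induced subcollection of
`Δ_t(C_n)` on the vertex set `W`. -/
def indSet (n t : ℕ) (W : Finset (ZMod n)) : Set (ZMod n) :=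
  {j | facet n t j ⊆ W}

theorem mem_facet {n t : ℕ} {c x : ZMod n} :
    x ∈ facet n t c ↔ ∃ r < t, c + (r : ZMod n) = x := by
  simp [facet]

/-- In a `t`-sparse set, `c + r = d + s` with `r, s ≤ t` forces `c = d`. -/
theorem TSparse.eq_of_add_eq {n t : ℕ} {C : Finset (ZMod n)} (hC : TSparse n t C)
    {c d : ZMod n} (hc : c ∈ C) (hd : d ∈ C) {r s : ℕ} (hr : r ≤ t) (hs : s ≤ t)
    (h : c + (r : ZMod n) = d + (s : ZMod n)) : c = d := by
  rcases lt_trichotomy r s with hrs | rfl | hrs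
  · refine absurd ?_ (hC d hd (s - r) (by omega) (by omega))
    have : d + ((s - r : ℕ) : ZMod n) = c := by
      rw [Nat.cast_sub hrs.le]; linear_combination -h
    rwa [this]
  · exact add_right_cancel h
  · refine absurd ?_ (hC c hc (r - s) (by omega) (by omega))
    have : c + ((r - s : ℕ) : ZMod n) = d := by
      rw [Nat.cast_sub hrs.le]; linear_combination h
    rwa [this]

theorem card_facet {n t : ℕ} (htn : t < n) (c : ZMod n) : (facet n t c).card = t := by
  rw [facet, Finset.card_image_of_injOn, Finset.card_range]
  intro r hr s hs h
  simp only [Finset.coe_range, Set.mem_Iio] at hr hs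
  have h' : (r : ZMod n) = s := add_left_cancel h
  rw [ZMod.natCast_eq_natCast_iff', Nat.mod_eq_of_lt (by omega), Nat.mod_eq_of_lt (by omega)] at h'
  exact h'

theorem TSparse.card_biUnion_facet {n t : ℕ} (htn : t < n) {C : Finset (ZMod n)}
    (hC : TSparse n t C) : (C.biUnion (facet n t)).card = C.card * t := by
  rw [Finset.card_biUnion]
  · simp [card_facet htn]
  · intro c hc d hd hcd
    refine Finset.disjoint_left.2 fun x hx hx' => ?_
    obtain ⟨r, hr, h⟩ := mem_facet.1 hx
    obtain ⟨s, hs, h'⟩ := mem_facet.1 hx'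
    exact hcd (hC.eq_of_add_eq hc hd hr.le hs.le (h.trans h'.symm))

theorem TSparse.disjoint_biUnion_facet {n t : ℕ} (ht : t < n) {C A : Finset (ZMod n)}
    (hC : TSparse n t C) (hA : A ⊆ C.image (fun c => c + (t : ZMod n))) :
    Disjoint (C.biUnion (facet n t)) A := by
  rw [Finset.disjoint_right]
  intro x hx hx'
  obtain ⟨c, hc, rfl⟩ := Finset.mem_image.1 (hA hx)
  obtain ⟨d, hd, hx'⟩ := Finset.mem_biUnion.1 hx'
  obtain ⟨r, hr, h⟩ := mem_facet.1 hx'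
  obtain rfl := hC.eq_of_add_eq hd hc hr.le le_rfl h
  have h' : (r : ZMod n) = t := add_left_cancel h
  rw [ZMod.natCast_eq_natCast_iff', Nat.mod_eq_of_lt (by omega), Nat.mod_eq_of_lt ht] at h'
  omega

/-- The inductive step of reading off a sparse set from its union, starting at a vertex `x`
outside of the union. -/
theorem TSparse.mem_of_union_eq {n t : ℕ} {C C' A A' : Finset (ZMod n)}
    (hC : TSparse n t C) (hA' : A' ⊆ C'.image (fun c => c + (t : ZMod n)))
    (h : C.biUnion (facet n t) ∪ A = C'.biUnion (facet n t) ∪ A') (ht : 0 < t) {x : ZMod n}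
    (hx : x ∉ C.biUnion (facet n t) ∪ A) (d : ℕ)
    (ih : ∀ e < d, x + (e : ZMod n) ∈ C' → x + (e : ZMod n) ∈ C)
    (hd : x + (d : ZMod n) ∈ C) : x + (d : ZMod n) ∈ C' := by
  have hW : x + (d : ZMod n) ∈ C'.biUnion (facet n t) ∪ A' := by
    rw [← h]
    exact Finset.mem_union_left _ (Finset.mem_biUnion.2 ⟨_, hd, mem_facet.2 ⟨0, ht, by simp⟩⟩)
  obtain ⟨c, hc, k, hk, hck⟩ : ∃ c ∈ C', ∃ k ≤ t, c + (k : ZMod n) = x + d := by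
    rcases Finset.mem_union.1 hW with hW | hW
    · obtain ⟨c, hc, hW⟩ := Finset.mem_biUnion.1 hW
      obtain ⟨r, hr, hcr⟩ := mem_facet.1 hW
      exact ⟨c, hc, r, hr.le, hcr⟩
    · obtain ⟨c, hc, hW⟩ := Finset.mem_image.1 (hA' hW)
      exact ⟨c, hc, t, le_rfl, hW⟩
  rcases Nat.eq_zero_or_pos k with rfl | hk0
  · rw [← hck]; simpa using hc
  rcases le_or_gt k d with hkd | hkd
  · have hce : x + ((d - k : ℕ) : ZMod n) = c := by
      rw [Nat.cast_sub hkd]; linear_combination -hck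
    have hcC := ih (d - k) (by omega) (hce ▸ hc)
    rw [hce] at hcC
    exact absurd (hck ▸ hd) (hC c hcC k hk0 hk)
  · rcases Nat.eq_zero_or_pos d with rfl | hd0
    · refine absurd (Finset.mem_union_left _ (Finset.mem_biUnion.2 ⟨_, hd, ?_⟩)) hx
      exact mem_facet.2 ⟨0, ht, by simp⟩
    · rw [h] at hx
      refine absurd (Finset.mem_union_left _ (Finset.mem_biUnion.2 ⟨c, hc, ?_⟩)) hx
      refine mem_facet.2 ⟨k - d, by omega, ?_⟩
      rw [Nat.cast_sub hkd.le]; linear_combination hck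

/-- A sparse set is determined by its union, unless that union is everything. -/
theorem TSparse.eq_of_union_eq {n t : ℕ} [NeZero n] {C C' A A' : Finset (ZMod n)}
    (hC : TSparse n t C) (hC' : TSparse n t C')
    (hA : A ⊆ C.image (fun c => c + (t : ZMod n)))
    (hA' : A' ⊆ C'.image (fun c => c + (t : ZMod n)))
    (h : C.biUnion (facet n t) ∪ A = C'.biUnion (facet n t) ∪ A') (ht : 0 < t) {x : ZMod n}
    (hx : x ∉ C.biUnion (facet n t) ∪ A) : C = C' := by
  have key : ∀ d : ℕ, x + (d : ZMod n) ∈ C ↔ x + (d : ZMod n) ∈ C' := by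
    intro d
    induction d using Nat.strong_induction_on with
    | _ d ih =>
      exact ⟨hC.mem_of_union_eq hA' h ht hx d fun e he => (ih e he).2,
        hC'.mem_of_union_eq hA h.symm ht (h ▸ hx) d fun e he => (ih e he).1⟩
  ext y
  have := key (y - x).val
  rwa [ZMod.natCast_zmod_val, add_sub_cancel] at this

open Classical in
/-- The `t`-sparse subsets of `ℤ/nℤ` of cardinality `i`. -/
noncomputable def sparseSets (n t i : ℕ) [NeZero n] : Finset (Finset (ZMod n)) :=
  {C | TSparse n t C ∧ C.card = i}

theorem mem_sparseSets {n t i : ℕ} [NeZero n] {C : Finset (ZMod n)} :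
    C ∈ sparseSets n t i ↔ TSparse n t C ∧ C.card = i := by
  simp [sparseSets]

theorem ncard_unions {n t i j : ℕ} [NeZero n] (ht : 0 < t) (htn : t < n) (hij : t * i + j < n) :
    {W : Finset (ZMod n) | ∃ C A : Finset (ZMod n),
      TSparse n t C ∧ C.card = i ∧ A ⊆ C.image (fun c => c + (t : ZMod n)) ∧ A.card = j ∧
      W = C.biUnion (facet n t) ∪ A}.ncard = (sparseSets n t i).card * i.choose j := by
  let P : Finset ((_ : Finset (ZMod n)) × Finset (ZMod n)) :=
    (sparseSets n t i).sigma fun C => (C.image (fun c => c + (t : ZMod n))).powersetCard j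
  let f : ((_ : Finset (ZMod n)) × Finset (ZMod n)) → Finset (ZMod n) :=
    fun p => p.1.biUnion (facet n t) ∪ p.2
  have hP : ∀ p, p ∈ P ↔ (TSparse n t p.1 ∧ p.1.card = i) ∧
      p.2 ⊆ p.1.image (fun c => c + (t : ZMod n)) ∧ p.2.card = j := by
    intro p
    simp only [P, Finset.mem_sigma, mem_sparseSets, Finset.mem_powersetCard]
  have hinj : Set.InjOn f P := by
    rintro ⟨C, A⟩ hp ⟨C', A'⟩ hp' h
    obtain ⟨⟨hC, hCi⟩, hA, hAj⟩ := (hP _).1 hp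
    obtain ⟨⟨hC', hCi'⟩, hA', hAj'⟩ := (hP _).1 hp'
    dsimp only [f] at h hC hCi hA hAj hC' hCi' hA' hAj'
    obtain ⟨x, hx⟩ : ∃ x, x ∉ C.biUnion (facet n t) ∪ A := by
      by_contra! hall
      have h1 := Finset.card_union_le (C.biUnion (facet n t)) A
      rw [Finset.eq_univ_iff_forall.2 hall, Finset.card_univ, ZMod.card,
        hC.card_biUnion_facet htn, hCi, hAj, mul_comm] at h1
      omega
    obtain rfl := hC.eq_of_union_eq hC' hA hA' h ht hx
    obtain rfl : A = A' := by
      rw [← Finset.union_sdiff_cancel_left (hC.disjoint_biUnion_facet htn hA), h,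
        Finset.union_sdiff_cancel_left (hC.disjoint_biUnion_facet htn hA')]
    rfl
  have hset : {W : Finset (ZMod n) | ∃ C A : Finset (ZMod n),
      TSparse n t C ∧ C.card = i ∧ A ⊆ C.image (fun c => c + (t : ZMod n)) ∧ A.card = j ∧
      W = C.biUnion (facet n t) ∪ A} = f '' P := by
    ext W
    simp only [Set.mem_ofPred_eq, Set.mem_image, Finset.mem_coe, hP]
    constructor
    · rintro ⟨C, A, h1, h2, h3, h4, rfl⟩
      exact ⟨⟨C, A⟩, ⟨⟨h1, h2⟩, h3, h4⟩, rfl⟩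
    · rintro ⟨⟨C, A⟩, ⟨⟨h1, h2⟩, h3, h4⟩, rfl⟩
      exact ⟨C, A, h1, h2, h3, h4, rfl⟩
  rw [hset, hinj.ncard_image, Set.ncard_coe_finset, Finset.card_sigma]
  refine Finset.sum_const_nat fun C hC => ?_
  rw [Finset.card_powersetCard, Finset.card_image_of_injective _ (add_left_injective _),
    (mem_sparseSets.1 hC).2]

/-- The `i`-subsets of `{1, …, N - t}` whose elements differ pairwise by more than `t`. -/
def linearSparseSets (N t i : ℕ) : Finset (Finset ℕ) :=
  {C ∈ (Finset.range (N + 1)).powersetCard i |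
    ∀ a ∈ C, 1 ≤ a ∧ a + t ≤ N ∧ ∀ b ∈ C, a < b → a + t < b}

theorem mem_linearSparseSets {N t i : ℕ} {C : Finset ℕ} :
    C ∈ linearSparseSets N t i ↔
      (∀ a ∈ C, 1 ≤ a ∧ a + t ≤ N ∧ ∀ b ∈ C, a < b → a + t < b) ∧ C.card = i := by
  simp only [linearSparseSets, Finset.mem_filter, Finset.mem_powersetCard]
  refine ⟨fun h => ⟨h.2, h.1.2⟩, fun h => ⟨⟨fun a ha => ?_, h.2⟩, h.1⟩⟩
  have := (h.1 a ha).2.1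
  exact Finset.mem_range.2 (by omega)

theorem linearSparseSets_succ_of_le {N t i : ℕ} (h : N ≤ t) :
    linearSparseSets N t (i + 1) = ∅ := by
  refine Finset.eq_empty_of_forall_notMem fun C hC => ?_
  obtain ⟨hC, hCi⟩ := mem_linearSparseSets.1 hC
  obtain ⟨a, ha⟩ := Finset.card_pos.1 (by omega : 0 < C.card)
  have := hC a ha
  omega

theorem card_linearSparseSets_succ {N t i : ℕ} (h : t ≤ N) :
    (linearSparseSets (N + 1) t (i + 1)).card =
      (linearSparseSets N t (i + 1)).card + (linearSparseSets (N - t) t i).card := by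
  have hnot : ∀ C ∈ linearSparseSets (N - t) t i, N + 1 - t ∉ C := by
    intro C hC hmem
    have := ((mem_linearSparseSets.1 hC).1 _ hmem).2.1
    omega
  rw [← Finset.card_filter_add_card_filter_not (fun C => N + 1 - t ∉ C)]
  congr 1
  · congr 1
    ext C
    simp only [Finset.mem_filter, mem_linearSparseSets]
    constructor
    · rintro ⟨⟨hC, hCi⟩, hmem⟩
      refine ⟨fun a ha => ⟨(hC a ha).1, ?_, (hC a ha).2.2⟩, hCi⟩
      have h1 := (hC a ha).2.1
      have h2 : a ≠ N + 1 - t := by rintro rfl; exact hmem ha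
      omega
    · rintro ⟨hC, hCi⟩
      refine ⟨⟨fun a ha => ⟨(hC a ha).1, (hC a ha).2.1.trans (by omega), (hC a ha).2.2⟩, hCi⟩, ?_⟩
      intro hmem
      have := (hC _ hmem).2.1
      omega
  · refine Finset.card_nbij' (fun C => C.erase (N + 1 - t)) (fun C => insert (N + 1 - t) C)
      ?_ ?_ ?_ ?_
    · intro C hC
      simp only [Finset.coe_filter, Set.mem_ofPred_eq, not_not, mem_linearSparseSets] at hC
      obtain ⟨⟨hC, hCi⟩, hmem⟩ := hC
      simp only [Finset.mem_coe, mem_linearSparseSets, Finset.card_erase_of_mem hmem, hCi]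
      refine ⟨fun a ha => ?_, rfl⟩
      obtain ⟨hne, ha⟩ := Finset.mem_erase.1 ha
      have h1 := hC a ha
      have h2 := h1.2.2 _ hmem (by omega)
      exact ⟨h1.1, by omega, fun b hb => h1.2.2 b (Finset.mem_of_mem_erase hb)⟩
    · intro C hC
      have hn := hnot C hC
      obtain ⟨hC, hCi⟩ := mem_linearSparseSets.1 hC
      simp only [Finset.coe_filter, Set.mem_ofPred_eq, not_not, mem_linearSparseSets,
        Finset.mem_insert_self, and_true, Finset.card_insert_of_notMem hn, hCi]
      intro a ha
      rcases Finset.mem_insert.1 ha with rfl | ha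
      · refine ⟨by omega, by omega, fun b hb hlt => ?_⟩
        rcases Finset.mem_insert.1 hb with rfl | hb
        · omega
        · have := (hC b hb).2.1
          omega
      · have h1 := hC a ha
        refine ⟨h1.1, by omega, fun b hb hlt => ?_⟩
        rcases Finset.mem_insert.1 hb with rfl | hb
        · omega
        · exact h1.2.2 b hb hlt
    · intro C hC
      simp only [Finset.coe_filter, Set.mem_ofPred_eq, not_not] at hC
      exact Finset.insert_erase hC.2
    · intro C hC
      exact Finset.erase_insert (hnot C hC)

theorem card_linearSparseSets {t : ℕ} (ht : 0 < t) (N i : ℕ) :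
    (linearSparseSets N t i).card = (N - i * t).choose i := by
  induction N using Nat.strong_induction_on generalizing i with
  | _ N ih =>
    rcases i with _ | i
    · have : linearSparseSets N t 0 = {∅} := by
        ext C
        simp only [mem_linearSparseSets, Finset.card_eq_zero, Finset.mem_singleton]
        exact ⟨fun h => h.2, by rintro rfl; simp⟩
      simp [this]
    have hmul : (i + 1) * t = i * t + t := by ring
    rcases le_or_gt N t with hN | hN
    · rw [linearSparseSets_succ_of_le hN, Nat.sub_eq_zero_of_le (by omega)]
      simp
    obtain ⟨N, rfl⟩ : ∃ M, N = M + 1 := ⟨N - 1, by omega⟩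
    have hNt : t ≤ N := by omega
    rw [card_linearSparseSets_succ hNt, ih N (by omega), ih (N - t) (by omega), hmul]
    rcases Nat.lt_or_ge N (i * t + t) with hlt | hge
    · have hi : 0 < i := by
        rcases Nat.eq_zero_or_pos i with rfl | hi
        · omega
        · exact hi
      rw [Nat.choose_eq_zero_of_lt (by omega : N + 1 - (i * t + t) < i + 1),
        Nat.choose_eq_zero_of_lt (by omega : N - (i * t + t) < i + 1),
        Nat.choose_eq_zero_of_lt (by omega : N - t - i * t < i)]
    · rw [show N + 1 - (i * t + t) = (N - (i * t + t)) + 1 by omega, Nat.choose_succ_succ',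
        show N - t - i * t = N - (i * t + t) by omega, add_comm]

theorem zero_notMem_facet_iff {n t : ℕ} [NeZero n] (ht : 0 < t) (c : ZMod n) :
    0 ∉ facet n t c ↔ 1 ≤ c.val ∧ c.val + t ≤ n := by
  have hc := ZMod.val_lt c
  constructor
  · intro h
    by_contra hcon
    refine h (mem_facet.2 ?_)
    rcases Nat.eq_zero_or_pos c.val with h0 | h0
    · exact ⟨0, ht, by simpa using (ZMod.val_eq_zero c).1 h0⟩
    · refine ⟨n - c.val, by omega, ?_⟩
      rw [Nat.cast_sub hc.le, ZMod.natCast_zmod_val, ZMod.natCast_self]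
      ring
  · rintro ⟨h1, h2⟩ h
    obtain ⟨r, hr, h⟩ := mem_facet.1 h
    rw [← ZMod.natCast_zmod_val c, ← Nat.cast_add, ZMod.natCast_eq_zero_iff] at h
    have := Nat.le_of_dvd (by omega) h
    omega

theorem card_sparseSets_avoiding_zero {n t : ℕ} [NeZero n] (ht : 0 < t) (i : ℕ) :
    {C ∈ sparseSets n t i | 0 ∉ C.biUnion (facet n t)}.card = (n - i * t).choose i := by
  rw [← card_linearSparseSets ht]
  have hval : ∀ C ∈ linearSparseSets n t i, ∀ a ∈ C, ((a : ZMod n)).val = a := by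
    intro C hC a ha
    have := ((mem_linearSparseSets.1 hC).1 a ha)
    exact ZMod.val_cast_of_lt (by omega)
  have hav : ∀ C : Finset (ZMod n), 0 ∉ C.biUnion (facet n t) ↔
      ∀ c ∈ C, 1 ≤ c.val ∧ c.val + t ≤ n := by
    intro C
    simp only [Finset.mem_biUnion, not_exists, not_and, zero_notMem_facet_iff ht]
  refine Finset.card_nbij' (fun C => C.image ZMod.val) (fun C => C.image Nat.cast) ?_ ?_ ?_ ?_
  · intro C hC
    simp only [Finset.coe_filter, Set.mem_ofPred_eq, mem_sparseSets, hav] at hC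
    obtain ⟨⟨hC, hCi⟩, hC0⟩ := hC
    simp only [Finset.mem_coe, mem_linearSparseSets, Finset.forall_mem_image,
      Finset.card_image_of_injective _ (ZMod.val_injective n), hCi, and_true]
    refine fun a ha => ⟨(hC0 a ha).1, (hC0 a ha).2, fun b hb hab => ?_⟩
    by_contra hcon
    refine hC a ha (b.val - a.val) (by omega) (by omega) ?_
    rw [Nat.cast_sub hab.le, ZMod.natCast_zmod_val, ZMod.natCast_zmod_val, add_sub_cancel]
    exact hb
  · intro C hCl
    have hv := hval C hCl
    obtain ⟨hC, hCi⟩ := mem_linearSparseSets.1 hCl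
    simp only [Finset.coe_filter, Set.mem_ofPred_eq, mem_sparseSets, hav, Finset.forall_mem_image]
    refine ⟨⟨?_, ?_⟩, fun a ha => ?_⟩
    · intro c hc k hk hkt hmem
      obtain ⟨a, ha, rfl⟩ := Finset.mem_image.1 hc
      obtain ⟨b, hb, hab⟩ := Finset.mem_image.1 hmem
      have h1 := hC a ha
      have h2 := hC b hb
      rw [← Nat.cast_add, ZMod.natCast_eq_natCast_iff', Nat.mod_eq_of_lt (by omega)] at hab
      rcases Nat.lt_or_ge (a + k) n with hlt | hge
      · rw [Nat.mod_eq_of_lt hlt] at hab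
        have := h1.2.2 b hb (by omega)
        omega
      · rw [show a + k = n by omega, Nat.mod_self] at hab
        omega
    · rw [Finset.card_image_of_injOn, hCi]
      intro a ha b hb hab
      rw [← hv a ha, ← hv b hb]
      exact congrArg ZMod.val hab
    · rw [hv a ha]
      exact ⟨(hC a ha).1, (hC a ha).2.1⟩
  · intro C _
    simp [Finset.image_image, Function.comp_def]
  · intro C hC
    dsimp only
    rw [Finset.image_image]
    conv_rhs => rw [← Finset.image_id (s := C)]
    exact Finset.image_congr fun a ha => hval C hC a ha

theorem TSparse.image_add {n t : ℕ} {C : Finset (ZMod n)} (hC : TSparse n t C) (x : ZMod n) :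
    TSparse n t (C.image (· + x)) := by
  intro c hc k hk hkt hmem
  obtain ⟨a, ha, rfl⟩ := Finset.mem_image.1 hc
  obtain ⟨b, hb, hab⟩ := Finset.mem_image.1 hmem
  refine hC a ha k hk hkt ?_
  rwa [show a + (k : ZMod n) = b by linear_combination -hab]

theorem mem_biUnion_facet_image_add {n t : ℕ} {C : Finset (ZMod n)} {x y : ZMod n} :
    y ∈ (C.image (· + x)).biUnion (facet n t) ↔ y - x ∈ C.biUnion (facet n t) := by
  simp only [Finset.mem_biUnion, Finset.exists_mem_image, mem_facet, eq_sub_iff_add_eq,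
    add_right_comm]

theorem card_sparseSets_avoiding {n t i : ℕ} [NeZero n] (x : ZMod n) :
    {C ∈ sparseSets n t i | x ∉ C.biUnion (facet n t)}.card =
      {C ∈ sparseSets n t i | 0 ∉ C.biUnion (facet n t)}.card := by
  refine Finset.card_nbij' (fun C => C.image (· + -x)) (fun C => C.image (· + x)) ?_ ?_ ?_ ?_
  · intro C hC
    simp only [Finset.coe_filter, Set.mem_ofPred_eq, mem_sparseSets] at hC ⊢
    refine ⟨⟨hC.1.1.image_add _, ?_⟩, ?_⟩
    · rw [Finset.card_image_of_injective _ (add_left_injective _), hC.1.2]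
    · rw [mem_biUnion_facet_image_add]
      simpa using hC.2
  · intro C hC
    simp only [Finset.coe_filter, Set.mem_ofPred_eq, mem_sparseSets] at hC ⊢
    refine ⟨⟨hC.1.1.image_add _, ?_⟩, ?_⟩
    · rw [Finset.card_image_of_injective _ (add_left_injective _), hC.1.2]
    · rw [mem_biUnion_facet_image_add, sub_self]
      exact hC.2
  · intro C _
    simp only [Finset.image_image, Function.comp_def, neg_add_cancel_right,
      Finset.image_id']
  · intro C _
    simp only [Finset.image_image, Function.comp_def, add_neg_cancel_right,
      Finset.image_id']

/-- Double counting of the pairs of a sparse set and a vertex outside of its facets. -/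
theorem sub_mul_card_sparseSets {n t : ℕ} [NeZero n] (ht : 0 < t) (htn : t < n) (i : ℕ) :
    (n - i * t) * (sparseSets n t i).card = n * (n - i * t).choose i := by
  have h := Finset.sum_card_bipartiteAbove_eq_sum_card_bipartiteBelow
    (s := sparseSets n t i) (t := (Finset.univ : Finset (ZMod n)))
    (fun C x => x ∉ C.biUnion (facet n t))
  have hl : ∀ C ∈ sparseSets n t i, (Finset.bipartiteAbove
      (fun C x => x ∉ C.biUnion (facet n t)) (Finset.univ : Finset (ZMod n)) C).card
        = n - i * t := by
    intro C hC
    obtain ⟨hC, hCi⟩ := mem_sparseSets.1 hC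
    have hcompl := Finset.card_compl (C.biUnion (facet n t))
    rw [ZMod.card, hC.card_biUnion_facet htn, hCi] at hcompl
    rw [← hcompl, Finset.bipartiteAbove]
    congr 1
    ext x
    simp
  have hr : ∀ x ∈ (Finset.univ : Finset (ZMod n)), (Finset.bipartiteBelow
      (fun C x => x ∉ C.biUnion (facet n t)) (sparseSets n t i) x).card
        = (n - i * t).choose i := fun x _ =>
    (card_sparseSets_avoiding x).trans (card_sparseSets_avoiding_zero ht i)
  rw [Finset.sum_const_nat hl, Finset.sum_const_nat hr, Finset.card_univ, ZMod.card] at h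
  rw [mul_comm, h]

/-- Theorem 4.10(i) in combinatorial form: the number `|𝒲|` of vertex sets of
`(i+j, t·i+j)`-eligible subcollections of `Δ_t(C_n)` — i.e. sets
`W = (⋃_{c ∈ C} F(c)) ∪ A` for a `t`-sparse `C` with `|C| = i` and
`A ⊆ {c + t : c ∈ C}` with `|A| = j` — satisfies
`(n - i·t)·|𝒲| = n·C(i, j)·C(n - i·t, i)`. -/
theorem stmt_9 (n t i j : ℕ) (ht : 2 ≤ t) (htn : t < n) (hi : 1 ≤ i)
    (hij : t * i + j < n) :
    (n - i * t) *
        {W : Finset (ZMod n) | ∃ C A : Finset (ZMod n),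
          TSparse n t C ∧ C.card = i ∧
          A ⊆ C.image (fun c => c + (t : ZMod n)) ∧ A.card = j ∧
          W = C.biUnion (facet n t) ∪ A}.ncard
      = n * (i.choose j) * ((n - i * t).choose i) := by
  have : NeZero n := ⟨by omega⟩
  rw [ncard_unions (by omega) htn hij, ← mul_assoc, sub_mul_card_sparseSets (by omega) htn]
  ring
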